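/- Let L be a finite atomic graded lattice and X ∈ L an element of rank at least 1. Then the family of independent sets of the restriction lattice [⊥, X] satisfies I([⊥, X]) = { I ∩ A(X) : I ∈ I(L) }, where A(X) denotes the set of atoms of L below X. -/

import Mathlib

open Set

/-- `rk` is a rank function witnessing that a (bounded) lattice is graded:
it sends `⊥` to `0`, is strictly monotone, and increases by exactly one along covers. -/
def IsGradedRk {L : Type*} [CompleteLattice L] (rk : L → ℕ) : Prop :=
  rk ⊥ = 0 ∧ (∀ a b : L, a < b → rk a < rk b) ∧ (∀ a b : L, a ⋖ b → rk b = rk a + 1)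

/-- `D` is bounded below with respect to the order on atoms encoded by the labeling `ω`:
`D` is nonempty and some atom `a` is a strict `ω`-lower bound of every element of `D`
with `a ≤ ⋁ D`. -/
def IsBB {L : Type*} [CompleteLattice L] (ω : L → ℕ) (D : Set L) : Prop :=
  D.Nonempty ∧ ∃ a : L, IsAtom a ∧ (∀ d ∈ D, ω a < ω d) ∧ a ≤ sSup D

/-- `B` is a set of atoms containing no bounded-below subset. -/
def IsNBB {L : Type*} [CompleteLattice L] (ω : L → ℕ) (B : Set L) : Prop :=
  (∀ b ∈ B, IsAtom b) ∧ ∀ D ⊆ B, ¬ IsBB ω D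

/-- The family `I(L)` of independent sets of the lattice `L`: all sets of atoms that are
NBB with respect to some linear order on the atoms (a linear order on the atoms of the
finite lattice `L` being encoded as an `ℕ`-valued labeling injective on atoms). -/
def latIndep (L : Type*) [CompleteLattice L] : Set (Set L) :=
  { A | ∃ ω : L → ℕ, Set.InjOn ω {a : L | IsAtom a} ∧ IsNBB ω A }

/-!
A set of atoms below `X` has its join below `X`, so the atoms of `L` that can witness that it is
bounded below are all atoms of `[⊥, X]`. Hence whether `S ⊆ A(X)` is NBB in `L` depends only on how
`ω` orders `A(X)`, and the question reduces to extending a linear order on `A(X)` to `A(L)`.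
Doubling a labeling of `A(X)` keeps its order and frees the odd numbers for the other atoms.
-/

theorem isAtom_coe_Iic {α : Type*} [PartialOrder α] [OrderBot α] {x : α} {a : Iic x} :
    IsAtom (a : α) ↔ IsAtom a :=
  ⟨fun h => h.Iic a.2, IsAtom.of_isAtom_coe_Iic⟩

theorem exists_injOn_extending_strictMono_comp {α : Type*} {s A : Set α}
    (hA : (A \ s).Countable) {ω : s → ℕ} (hω : InjOn ω (Subtype.val ⁻¹' A)) :
    ∃ (ω' : α → ℕ) (f : ℕ → ℕ), InjOn ω' A ∧ StrictMono f ∧ ω' ∘ Subtype.val = f ∘ ω := by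
  obtain ⟨e, he⟩ := countable_iff_exists_injOn.1 hA
  let ω' : α → ℕ := Function.extend Subtype.val (fun a => 2 * ω a) (fun a => 2 * e a + 1)
  have even_on (a : s) : ω' a = 2 * ω a := Subtype.val_injective.extend_apply _ _ a
  have odd_off {a : α} (ha : a ∉ s) : ω' a = 2 * e a + 1 :=
    Function.extend_apply' _ _ a fun ⟨b, hb⟩ => ha (hb ▸ b.2)
  refine ⟨ω', (2 * ·), ?_, fun _ _ => by dsimp only; lia, funext even_on⟩
  rw [← inter_union_sdiff A s, injOn_union disjoint_sdiff_inter.symm]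
  refine ⟨?_, ?_, ?_⟩
  · rintro a ⟨haA, has⟩ b ⟨hbA, hbs⟩ hab
    rw [even_on ⟨a, has⟩, even_on ⟨b, hbs⟩] at hab
    exact congrArg Subtype.val (hω haA hbA (Nat.eq_of_mul_eq_mul_left two_pos hab))
  · intro a ha b hb hab
    rw [odd_off ha.2, odd_off hb.2] at hab
    exact he ha hb (by lia)
  · rintro a ⟨-, has⟩ b ⟨-, hbs⟩
    rw [even_on ⟨a, has⟩, odd_off hbs]
    lia

section

variable {L : Type*} [CompleteLattice L] {X : L} {ω : L → ℕ}

theorem IsNBB.mono {A B : Set L} (hB : IsNBB ω B) (hAB : A ⊆ B) : IsNBB ω A :=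
  ⟨fun a ha => hB.1 a (hAB ha), fun D hD => hB.2 D (hD.trans hAB)⟩

theorem mem_latIndep_of_subset {A B : Set L} (hB : B ∈ latIndep L) (hAB : A ⊆ B) :
    A ∈ latIndep L :=
  let ⟨ω, hω, hNBB⟩ := hB
  ⟨ω, hω, hNBB.mono hAB⟩

theorem isNBB_strictMono_comp {f : ℕ → ℕ} (hf : StrictMono f) {B : Set L} :
    IsNBB (f ∘ ω) B ↔ IsNBB ω B := by
  simp only [IsNBB, IsBB, Function.comp_apply, hf.lt_iff_lt]

theorem isBB_image_coe_Iic {D : Set (Iic X)} :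
    IsBB ω (Subtype.val '' D) ↔ IsBB (ω ∘ Subtype.val) D := by
  refine and_congr image_nonempty ⟨?_, ?_⟩
  · rintro ⟨a, ha, hlt, hle⟩
    have haX : a ≤ X := hle.trans (sSup D).2
    exact ⟨⟨a, haX⟩, ha.Iic haX, fun d hd => hlt d (mem_image_of_mem _ hd), hle⟩
  · rintro ⟨a, ha, hlt, hle⟩
    exact ⟨a, ha.of_isAtom_coe_Iic, forall_mem_image.2 hlt, hle⟩

theorem isNBB_image_coe_Iic {S : Set (Iic X)} :
    IsNBB ω (Subtype.val '' S) ↔ IsNBB (ω ∘ Subtype.val) S := by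
  simp only [IsNBB, forall_mem_image, forall_subset_image_iff, isAtom_coe_Iic, isBB_image_coe_Iic]

theorem image_coe_mem_latIndep_iff (hcount : ({a : L | IsAtom a} \ Iic X).Countable)
    {S : Set (Iic X)} :
    Subtype.val '' S ∈ latIndep L ↔ S ∈ latIndep (Iic X) := by
  have atoms_Iic : Subtype.val ⁻¹' {a : L | IsAtom a} = {a : Iic X | IsAtom a} :=
    ext fun _ => isAtom_coe_Iic
  constructor
  · rintro ⟨ω, hω, hS⟩
    refine ⟨ω ∘ Subtype.val, ?_, isNBB_image_coe_Iic.1 hS⟩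
    rw [← atoms_Iic]
    exact hω.comp Subtype.val_injective.injOn (mapsTo_preimage _ _)
  · rintro ⟨ω, hω, hS⟩
    rw [← atoms_Iic] at hω
    obtain ⟨ω', f, hω', hf, hext⟩ := exists_injOn_extending_strictMono_comp hcount hω
    refine ⟨ω', hω', isNBB_image_coe_Iic.2 ?_⟩
    rw [hext]
    exact (isNBB_strictMono_comp hf).2 hS

end

theorem latIndep_Iic_general {L : Type*} [CompleteLattice L] (X : L)
    (hcount : ({a : L | IsAtom a} \ Iic X).Countable) :
    latIndep (Iic X) =
      {S : Set (Iic X) |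
        ∃ I ∈ latIndep L, Subtype.val '' S = I ∩ {a : L | IsAtom a ∧ a ≤ X}} := by
  ext S
  rw [← image_coe_mem_latIndep_iff hcount]
  constructor
  · intro hS
    have atoms_below : Subtype.val '' S ⊆ {a : L | IsAtom a ∧ a ≤ X} := by
      obtain ⟨ω, -, hatom, -⟩ := hS
      exact forall_mem_image.2 fun a ha => ⟨hatom a (mem_image_of_mem _ ha), a.2⟩
    exact ⟨Subtype.val '' S, hS, (inter_eq_left.2 atoms_below).symm⟩
  · rintro ⟨I, hI, hSI⟩
    exact mem_latIndep_of_subset hI (hSI ▸ inter_subset_left)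

/-- Let `L` be a finite atomic graded lattice and `X ∈ L` of rank at least
one. Then the independent sets of the restriction `[⊥, X]` (the interval `Set.Iic X`) are
exactly the sets of the form `I ∩ A(X)` for `I ∈ I(L)`, where `A(X)` is the set of atoms of
`L` lying below `X`. -/
theorem latIndep_Iic
    {L : Type*} [CompleteLattice L] [Fintype L] [IsAtomistic L]
    (rk : L → ℕ) (hrk : IsGradedRk rk)
    (X : L) (hX : 1 ≤ rk X) :
    latIndep (Set.Iic X) =
      {S : Set (Set.Iic X) |
        ∃ I ∈ latIndep L, Subtype.val '' S = I ∩ {a : L | IsAtom a ∧ a ≤ X}} :=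
  latIndep_Iic_general X (toFinite _).countable
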